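/- arXiv:2204.09887 — 2 statements merged into one kernel-verified Lean document; each statement's English description precedes it below -/
import Mathlib

section
/- Let ν, z ∈ ℂ with Re(ν) > 1/2 and Re(z) > 0. Then (1/2)Γ(ν) + 2 Σ_{n=1}^∞ (nz/2)^ν K_ν(nz) = Γ(1/2) Γ(ν+1/2) z^{2ν} ( z^{−(2ν+1)} + 2 Σ_{n=1}^∞ (z² + 4n²π²)^{−(ν+1/2)} ). -/
open scoped Real

noncomputable def besselK (ν z : ℂ) : ℂ :=
  ∫ t in Set.Ioi (0:ℝ), Complex.exp (-z * Real.cosh t) * Complex.cosh (ν * t)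

section

open Complex Set MeasureTheory Filter Topology

lemma log_mul_of_re_pos {a b : ℂ} (ha : 0 < a.re) (hb : 0 < b.re) :
    log (a * b) = log a + log b := by
  have ha' : a ≠ 0 := by rintro rfl; simp at ha
  have hb' : b ≠ 0 := by rintro rfl; simp at hb
  have h1 := abs_lt.1 (abs_arg_lt_pi_div_two_iff.2 (Or.inl ha))
  have h2 := abs_lt.1 (abs_arg_lt_pi_div_two_iff.2 (Or.inl hb))
  exact Complex.log_mul ha' hb' ⟨by linarith [h1.1, h2.1], by linarith [h1.2, h2.2]⟩

lemma log_inv_of_re_pos {a : ℂ} (ha : 0 < a.re) : log a⁻¹ = -log a := by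
  refine Complex.log_inv _ fun h => ?_
  have h1 := abs_lt.1 (abs_arg_lt_pi_div_two_iff.2 (Or.inl ha))
  linarith [h1.2, Real.pi_pos]

lemma norm_cpow_mul_exp {t : ℝ} (ht : 0 < t) (a w : ℂ) :
    ‖(t : ℂ) ^ (a - 1) * exp w‖ = t ^ (a.re - 1) * Real.exp w.re := by
  rw [norm_mul, norm_cpow_eq_rpow_re_of_pos ht, norm_exp]
  simp

lemma continuousOn_cpow_mul {f : ℝ → ℂ} (a : ℂ) (hf : ContinuousOn f (Ioi 0)) :
    ContinuousOn (fun t : ℝ => (t : ℂ) ^ (a - 1) * f t) (Ioi 0) :=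
  ContinuousOn.mul (fun t ht =>
    (continuousAt_ofReal_cpow_const t _ (Or.inr (ne_of_gt ht))).continuousWithinAt) hf

lemma integrableOn_rpow_mul_exp_neg_mul {a r : ℝ} (ha : 0 < a) (hr : 0 < r) :
    IntegrableOn (fun t : ℝ => t ^ (a - 1) * Real.exp (-(r * t))) (Ioi 0) := by
  have := integrableOn_rpow_mul_exp_neg_mul_rpow (p := 1) (s := a - 1) (b := r)
    (by linarith) one_pos hr
  simpa using this

lemma integrableOn_cpow_mul_exp {a : ℂ} {r : ℝ} (ha : 0 < a.re) (hr : 0 < r) {f : ℝ → ℂ}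
    (hf : ContinuousOn f (Ioi 0)) (hfr : ∀ t : ℝ, 0 < t → (f t).re ≤ -(r * t)) :
    IntegrableOn (fun t : ℝ => (t : ℂ) ^ (a - 1) * exp (f t)) (Ioi 0) := by
  refine (integrableOn_rpow_mul_exp_neg_mul ha hr).mono'
    ((continuousOn_cpow_mul a hf.cexp).aestronglyMeasurable measurableSet_Ioi) ?_
  filter_upwards [ae_restrict_mem measurableSet_Ioi] with t ht
  rw [norm_cpow_mul_exp ht]
  have ht' : (0 : ℝ) < t := ht
  gcongr
  exact hfr t ht

lemma integrableOn_cpow_mul_exp_neg_mul {a r : ℂ} (ha : 0 < a.re) (hr : 0 < r.re) :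
    IntegrableOn (fun t : ℝ => (t : ℂ) ^ (a - 1) * exp (-(r * t))) (Ioi 0) :=
  integrableOn_cpow_mul_exp ha hr (by fun_prop) fun t _ => by simp

lemma differentiableAt_integral_cpow_mul_exp {a r : ℂ} (ha : 0 < a.re) (hr : 0 < r.re) :
    DifferentiableAt ℂ
      (fun w : ℂ => ∫ t : ℝ in Ioi 0, (t : ℂ) ^ (a - 1) * exp (-(w * t))) r := by
  have hs : {w : ℂ | r.re / 2 < w.re} ∈ 𝓝 r :=
    (isOpen_lt continuous_const continuous_re).mem_nhds (by simp [half_lt_self hr])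
  refine (hasDerivAt_integral_of_dominated_loc_of_deriv_le
    (F := fun (w : ℂ) (t : ℝ) => (t : ℂ) ^ (a - 1) * exp (-(w * t)))
    (F' := fun (w : ℂ) (t : ℝ) => (t : ℂ) ^ (a - 1) * (exp (-(w * t)) * (-t)))
    (bound := fun t : ℝ => t ^ ((a.re + 1) - 1) * Real.exp (-(r.re / 2 * t)))
    hs ?_ ?_ ?_ ?_ ?_ ?_).2.differentiableAt
  · exact .of_forall fun w => (continuousOn_cpow_mul a (by fun_prop)).aestronglyMeasurable
      measurableSet_Ioi
  · exact integrableOn_cpow_mul_exp_neg_mul ha hr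
  · exact (continuousOn_cpow_mul a (by fun_prop)).aestronglyMeasurable measurableSet_Ioi
  · filter_upwards [ae_restrict_mem measurableSet_Ioi] with t ht w hw
    have ht' : (0 : ℝ) < t := ht
    have hw' : r.re / 2 < w.re := hw
    rw [← mul_assoc, norm_mul, norm_cpow_mul_exp ht, norm_neg, norm_real, Real.norm_of_nonneg ht'.le,
      show a.re + 1 - 1 = (a.re - 1) + 1 by ring, Real.rpow_add_one ht'.ne', mul_right_comm]
    gcongr
    simp
    gcongr
  · exact integrableOn_rpow_mul_exp_neg_mul (by linarith) (half_pos hr)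
  · refine .of_forall fun t w _ => ?_
    have h : HasDerivAt (fun w : ℂ => -(w * t)) (-(t : ℂ)) w := by
      simpa using ((hasDerivAt_id' w).mul_const (t : ℂ)).fun_neg
    exact h.cexp.const_mul _

/-- The Gamma integral with complex rate. -/
lemma integral_cpow_mul_exp_neg_mul_of_re_pos {a r : ℂ} (ha : 0 < a.re) (hr : 0 < r.re) :
    ∫ t : ℝ in Ioi 0, (t : ℂ) ^ (a - 1) * exp (-(r * t)) = r ^ (-a) * Gamma a := by
  have hU : IsOpen {w : ℂ | 0 < w.re} := isOpen_lt continuous_const continuous_re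
  have hf : AnalyticOnNhd ℂ
      (fun w : ℂ => ∫ t : ℝ in Ioi 0, (t : ℂ) ^ (a - 1) * exp (-(w * t))) {w : ℂ | 0 < w.re} :=
    DifferentiableOn.analyticOnNhd
      (fun w hw => (differentiableAt_integral_cpow_mul_exp ha hw).differentiableWithinAt) hU
  have hg : AnalyticOnNhd ℂ (fun w : ℂ => w ^ (-a) * Gamma a) {w : ℂ | 0 < w.re} :=
    DifferentiableOn.analyticOnNhd (fun w hw => (DifferentiableAt.mul_const
      (DifferentiableAt.cpow_const differentiableAt_id (Or.inl hw)) _).differentiableWithinAt) hU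
  have ht : Tendsto (fun x : ℝ => (x : ℂ)) (𝓝[≠] 1) (𝓝[≠] 1) := by
    refine tendsto_nhdsWithin_of_tendsto_nhds_of_eventually_within _ ?_ ?_
    · exact (continuous_ofReal.tendsto' 1 1 (by simp)).mono_left nhdsWithin_le_nhds
    · filter_upwards [self_mem_nhdsWithin] with x hx
      simpa using hx
  refine hf.eqOn_of_preconnected_of_frequently_eq hg
    (convex_halfSpace_re_gt 0).isPreconnected (z₀ := 1) (by simp) (ht.frequently ?_) hr
  refine Eventually.frequently ?_
  filter_upwards [mem_nhdsWithin_of_mem_nhds (Ioi_mem_nhds (zero_lt_one' ℝ))] with x hx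
  rw [integral_cpow_mul_exp_neg_mul_Ioi ha hx, one_div, ← ofReal_inv, cpow_neg,
    ofReal_inv, inv_cpow_ofReal_nonneg (le_of_lt hx)]

lemma besselK_eq_integral_Ioi {ν x : ℂ} (hν : 0 < ν.re) (hx : 0 < x.re) :
    besselK ν x =
      1 / 2 * ∫ s : ℝ in Ioi 0, (s : ℂ) ^ (ν - 1) * exp (-(x / 2 * (s + (s : ℂ)⁻¹))) := by
  set g : ℝ → ℂ := fun s => (s : ℂ) ^ (ν - 1) * exp (-(x / 2 * (s + (s : ℂ)⁻¹))) with hg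
  have him : Real.exp '' univ = Ioi 0 := by rw [image_univ, Real.range_exp]
  have hd : ∀ t ∈ (univ : Set ℝ), HasDerivWithinAt Real.exp (Real.exp t) univ t :=
    fun t _ => (Real.hasDerivAt_exp t).hasDerivWithinAt
  have hinj : InjOn Real.exp univ := Real.exp_injective.injOn
  have hgint : IntegrableOn g (Ioi 0) := by
    refine integrableOn_cpow_mul_exp hν (half_pos hx) ?_ ?_
    · have : ContinuousOn (fun s : ℝ => (s : ℂ)⁻¹) (Ioi 0) :=
        ContinuousOn.inv₀ (by fun_prop) fun s hs => ofReal_ne_zero.2 (ne_of_gt hs)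
      fun_prop
    · intro t ht
      have : (-(x / 2 * (t + (t : ℂ)⁻¹))).re = -(x.re / 2 * (t + t⁻¹)) := by
        rw [← ofReal_inv, ← ofReal_add, neg_re, re_mul_ofReal]
        simp
      rw [this]
      have := inv_pos.2 ht
      gcongr
      linarith
  have hpt : ∀ t : ℝ, |Real.exp t| • g (Real.exp t) = exp (-x * Real.cosh t) * exp (ν * t) := by
    intro t
    have h1 : ((Real.exp t : ℝ) : ℂ) ^ (ν - 1) = exp (ν * t) * exp (-t) := by
      rw [cpow_def_of_ne_zero (by exact_mod_cast (Real.exp_pos t).ne'), ← ofReal_log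
        (Real.exp_pos t).le, Real.log_exp, ← exp_add]
      congr 1; ring
    simp only [hg]
    rw [abs_of_pos (Real.exp_pos t), h1, real_smul, ofReal_exp, ← exp_neg, ofReal_cosh, cosh,
      ← mul_assoc, mul_comm (exp (ν * t)), ← mul_assoc, ← exp_add, add_neg_cancel, exp_zero,
      one_mul, mul_comm]
    congr 2; ring
  have hint : Integrable (fun t : ℝ => exp (-x * Real.cosh t) * exp (ν * t)) := by
    have := (integrableOn_image_iff_integrableOn_abs_deriv_smul MeasurableSet.univ hd hinj g).1
      (him ▸ hgint)
    simpa only [hpt, integrableOn_univ] using this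
  have heq : ∫ s in Ioi 0, g s = ∫ t : ℝ, exp (-x * Real.cosh t) * exp (ν * t) := by
    rw [← him, integral_image_eq_integral_abs_deriv_smul MeasurableSet.univ hd hinj g]
    simp only [hpt, setIntegral_univ]
  have hneg := integral_comp_neg_Ioi 0 (fun t : ℝ => exp (-x * Real.cosh t) * exp (ν * t))
  have hint' : Integrable (fun t : ℝ => exp (-x * Real.cosh (-t)) * exp (ν * (-t : ℝ))) :=
    hint.comp_neg
  rw [neg_zero] at hneg
  rw [heq, ← intervalIntegral.integral_Iic_add_Ioi hint.integrableOn hint.integrableOn (b := 0),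
    ← hneg, ← integral_add hint'.integrableOn hint.integrableOn, ← integral_const_mul, besselK]
  refine setIntegral_congr_fun measurableSet_Ioi fun t _ => ?_
  simp only [Complex.cosh, Real.cosh_neg]
  push_cast
  rw [mul_neg]
  ring

lemma cpow_mul_besselK {ν z : ℂ} (hν : 0 < ν.re) (hz : 0 < z.re) {m : ℝ} (hm : 0 < m) :
    (m * z / 2) ^ ν * besselK ν (m * z) = 1 / 2 * (z / 2) ^ ν *
      ∫ u : ℝ in Ioi 0, (u : ℂ) ^ (ν - 1) * exp (-(z / 2 * (u + (m : ℂ) ^ 2 * (u : ℂ)⁻¹))) := by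
  have hm0 : (m : ℂ) ≠ 0 := ofReal_ne_zero.2 hm.ne'
  have hz2 : z / 2 ≠ 0 := div_ne_zero (by rintro rfl; simp at hz) two_ne_zero
  have hmz : 0 < (m * z).re := by rw [re_ofReal_mul]; positivity
  have hscale := integral_comp_mul_left_Ioi' (fun u : ℝ => (u : ℂ) ^ (ν - 1) *
    exp (-(z / 2 * (u + (m : ℂ) ^ 2 * (u : ℂ)⁻¹)))) 0 hm
  rw [mul_zero] at hscale
  have hpow : (m * z / 2 : ℂ) ^ ν = (m : ℂ) ^ ν * (z / 2) ^ ν := by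
    rw [mul_div_assoc, cpow_def_of_ne_zero (mul_ne_zero hm0 hz2), log_ofReal_mul hm hz2,
      cpow_def_of_ne_zero hm0, cpow_def_of_ne_zero hz2, ← exp_add, ofReal_log hm.le]
    ring_nf
  have hcomp : ∫ s : ℝ in Ioi 0, ((m * s : ℝ) : ℂ) ^ (ν - 1) *
        exp (-(z / 2 * ((m * s : ℝ) + (m : ℂ) ^ 2 * ((m * s : ℝ) : ℂ)⁻¹))) =
      (m : ℂ) ^ (ν - 1) * ∫ s : ℝ in Ioi 0, (s : ℂ) ^ (ν - 1) *
        exp (-(m * z / 2 * (s + (s : ℂ)⁻¹))) := by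
    rw [← integral_const_mul]
    refine setIntegral_congr_fun measurableSet_Ioi fun s hs => ?_
    have hs0 : (s : ℂ) ≠ 0 := ofReal_ne_zero.2 (ne_of_gt hs)
    simp only [ofReal_mul]
    rw [mul_cpow_ofReal_nonneg hm.le (le_of_lt hs), mul_assoc]
    congr 3
    field_simp
  rw [besselK_eq_integral_Ioi hν hmz, hpow, ← hscale, hcomp, real_smul, cpow_sub _ _ hm0, cpow_one]
  field_simp

lemma tsum_exp_neg_theta {z : ℂ} (hz : 0 < z.re) (ν : ℂ) {u : ℝ} (hu : 0 < u) :
    ∑' n : ℤ, (u : ℂ) ^ (ν - 1) * exp (-(z / 2 * (u + (n : ℂ) ^ 2 * (u : ℂ)⁻¹))) =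
      (2 * π / z) ^ (1 / 2 : ℂ) * ∑' n : ℤ, (u : ℂ) ^ (ν + 1 / 2 - 1) *
        exp (-((z / 2 + 2 * π ^ 2 * (n : ℂ) ^ 2 / z) * u)) := by
  have hz0 : z ≠ 0 := by rintro rfl; simp at hz
  have hu0 : (u : ℂ) ≠ 0 := ofReal_ne_zero.2 hu.ne'
  have hpi : (π : ℂ) ≠ 0 := ofReal_ne_zero.2 Real.pi_ne_zero
  have hc : 0 < (2 * π * u)⁻¹ := by positivity
  have ha : 0 < (((2 * π * u)⁻¹ : ℝ) * z).re := by rw [re_ofReal_mul]; positivity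
  have hroot : 1 / (((2 * π * u)⁻¹ : ℝ) * z : ℂ) ^ (1 / 2 : ℂ) =
      (2 * π / z) ^ (1 / 2 : ℂ) * (u : ℂ) ^ (1 / 2 : ℂ) := by
    have h2 : (2 * π / z : ℂ) = ((2 * π : ℝ) : ℂ) * z⁻¹ := by push_cast; rw [div_eq_mul_inv]
    rw [h2, cpow_def_of_ne_zero (mul_ne_zero (ofReal_ne_zero.2 hc.ne') hz0),
      cpow_def_of_ne_zero (mul_ne_zero (by simp [Real.pi_ne_zero]) (inv_ne_zero hz0)),
      cpow_def_of_ne_zero hu0, log_ofReal_mul hc hz0,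
      log_ofReal_mul (by positivity) (inv_ne_zero hz0), log_inv_of_re_pos hz, Real.log_inv,
      Real.log_mul (by positivity) hu.ne', one_div, ← exp_neg, ← exp_add, ← ofReal_log hu.le]
    congr 1
    push_cast
    ring
  have hterm (n : ℤ) : (u : ℂ) ^ (ν - 1) * exp (-(z / 2 * (u + (n : ℂ) ^ 2 * (u : ℂ)⁻¹))) =
      (u : ℂ) ^ (ν - 1) * exp (-(z / 2 * u)) *
        exp (-π * (((2 * π * u)⁻¹ : ℝ) * z) * (n : ℂ) ^ 2) := by
    rw [mul_assoc, ← exp_add]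
    congr 2
    push_cast
    field_simp
    ring
  have hterm' (n : ℤ) : (u : ℂ) ^ (ν + 1 / 2 - 1) *
        exp (-((z / 2 + 2 * π ^ 2 * (n : ℂ) ^ 2 / z) * u)) =
      (u : ℂ) ^ (ν - 1) * (u : ℂ) ^ (1 / 2 : ℂ) * exp (-(z / 2 * u)) *
        exp (-π / (((2 * π * u)⁻¹ : ℝ) * z) * (n : ℂ) ^ 2) := by
    rw [mul_assoc (_ * _) (exp _), ← exp_add, ← cpow_add _ _ hu0]
    congr 2
    · ring
    · push_cast
      field_simp
      ring
  simp_rw [hterm, hterm', tsum_mul_left]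
  rw [Complex.tsum_exp_neg_mul_int_sq ha, hroot]
  ring

lemma continuousOn_exponent (z : ℂ) (n : ℤ) :
    ContinuousOn (fun u : ℝ => -(z / 2 * (u + (n : ℂ) ^ 2 * (u : ℂ)⁻¹))) (Ioi 0) := by
  have : ContinuousOn (fun s : ℝ => (s : ℂ)⁻¹) (Ioi 0) :=
    ContinuousOn.inv₀ (by fun_prop) fun s hs => ofReal_ne_zero.2 (ne_of_gt hs)
  fun_prop

lemma re_exponent (z : ℂ) (n : ℤ) (u : ℝ) :
    (-(z / 2 * (u + (n : ℂ) ^ 2 * (u : ℂ)⁻¹))).re =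
      -(z.re / 2 * u) - z.re / 2 * ((n : ℝ) ^ 2 * u⁻¹) := by
  have : (u + (n : ℂ) ^ 2 * (u : ℂ)⁻¹ : ℂ) = ((u + (n : ℝ) ^ 2 * u⁻¹ : ℝ) : ℂ) := by push_cast; rfl
  rw [this, neg_re, re_mul_ofReal]
  simp
  ring

lemma integrableOn_bessel_term {ν z : ℂ} (hν : 0 < ν.re) (hz : 0 < z.re) (n : ℤ) :
    IntegrableOn (fun u : ℝ => (u : ℂ) ^ (ν - 1) *
      exp (-(z / 2 * (u + (n : ℂ) ^ 2 * (u : ℂ)⁻¹)))) (Ioi 0) := by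
  refine integrableOn_cpow_mul_exp hν (half_pos hz) (continuousOn_exponent z n) fun t ht => ?_
  rw [re_exponent]
  have : 0 ≤ z.re / 2 * ((n : ℝ) ^ 2 * t⁻¹) := by positivity
  linarith

lemma summable_integral_norm_bessel_term {ν z : ℂ} (hν : 0 < ν.re) (hz : 0 < z.re) :
    Summable fun n : ℤ => ∫ u : ℝ in Ioi 0, ‖(u : ℂ) ^ (ν - 1) *
      exp (-(z / 2 * (u + (n : ℂ) ^ 2 * (u : ℂ)⁻¹)))‖ := by
  set C := ∫ u : ℝ in Ioi 0, u ^ (ν.re + 1 - 1) * Real.exp (-(z.re / 2 * u)) with hC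
  refine Summable.of_norm_bounded_eventually
    (((Real.summable_one_div_int_pow (p := 2)).2 one_lt_two).mul_left (2 / z.re * C)) ?_
  have h0 : ∀ᶠ n : ℤ in cofinite, n ≠ 0 := (Set.finite_singleton 0).compl_mem_cofinite
  filter_upwards [h0] with n hn
  have hn' : (n : ℝ) ≠ 0 := Int.cast_ne_zero.2 hn
  rw [Real.norm_of_nonneg (integral_nonneg fun _ => norm_nonneg _), mul_right_comm, hC,
    ← integral_const_mul]
  refine setIntegral_mono_on (integrableOn_bessel_term hν hz n).norm
    ((integrableOn_rpow_mul_exp_neg_mul (by linarith) (half_pos hz)).const_mul _)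
    measurableSet_Ioi fun u hu => ?_
  have hu' : (0 : ℝ) < u := hu
  rw [norm_cpow_mul_exp hu', re_exponent, sub_eq_add_neg (-_), Real.exp_add,
    show ν.re + 1 - 1 = (ν.re - 1) + 1 by ring, Real.rpow_add_one hu'.ne']
  have hy : 0 < z.re / 2 * ((n : ℝ) ^ 2 * u⁻¹) := by positivity
  have hexp : Real.exp (-(z.re / 2 * ((n : ℝ) ^ 2 * u⁻¹))) ≤ 2 / z.re * (1 / (n : ℝ) ^ 2) * u := by
    have h : (2 / z.re * (1 / (n : ℝ) ^ 2) * u) = (z.re / 2 * ((n : ℝ) ^ 2 * u⁻¹))⁻¹ := by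
      field_simp
    rw [h, Real.exp_neg]
    exact inv_anti₀ hy (by linarith [Real.add_one_le_exp (z.re / 2 * ((n : ℝ) ^ 2 * u⁻¹))])
  calc u ^ (ν.re - 1) * (Real.exp (-(z.re / 2 * u)) *
        Real.exp (-(z.re / 2 * ((n : ℝ) ^ 2 * u⁻¹))))
      ≤ u ^ (ν.re - 1) * (Real.exp (-(z.re / 2 * u)) * (2 / z.re * (1 / (n : ℝ) ^ 2) * u)) := by
        gcongr
    _ = _ := by ring

lemma re_rate (z : ℂ) (n : ℤ) : (z / 2 + 2 * π ^ 2 * (n : ℂ) ^ 2 / z).re =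
    z.re / 2 + 2 * π ^ 2 * z.re / normSq z * (n : ℝ) ^ 2 := by
  have : (2 * π ^ 2 * (n : ℂ) ^ 2 / z : ℂ) = ((2 * π ^ 2 * (n : ℝ) ^ 2 : ℝ) : ℂ) * z⁻¹ := by
    push_cast; rw [div_eq_mul_inv]
  rw [add_re, this, re_ofReal_mul, inv_re]
  simp
  ring

lemma re_rate_pos {z : ℂ} (hz : 0 < z.re) (n : ℤ) :
    0 < (z / 2 + 2 * π ^ 2 * (n : ℂ) ^ 2 / z).re := by
  have := normSq_nonneg z
  rw [re_rate]
  positivity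

lemma summable_integral_norm_gamma_term {s z : ℂ} (hs : 1 < s.re) (hz : 0 < z.re) :
    Summable fun n : ℤ => ∫ u : ℝ in Ioi 0, ‖(u : ℂ) ^ (s - 1) *
      exp (-((z / 2 + 2 * π ^ 2 * (n : ℂ) ^ 2 / z) * u))‖ := by
  have hs0 : 0 < s.re := by linarith
  have hz0 : z ≠ 0 := by rintro rfl; simp at hz
  set c := 2 * π ^ 2 * z.re / normSq z with hc
  have hcpos : 0 < c := by have := normSq_pos.2 hz0; positivity
  refine Summable.of_norm_bounded_eventually
    ((Real.summable_abs_int_rpow (b := 2 * s.re) (by linarith)).mul_left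
      (c ^ (-s.re) * Real.Gamma s.re)) ?_
  have h0 : ∀ᶠ n : ℤ in cofinite, n ≠ 0 := (Set.finite_singleton 0).compl_mem_cofinite
  filter_upwards [h0] with n hn
  have hn' : 0 < |(n : ℝ)| := abs_pos.2 (Int.cast_ne_zero.2 hn)
  have hr := re_rate_pos hz n
  have hnorm : ∫ u : ℝ in Ioi 0, ‖(u : ℂ) ^ (s - 1) *
      exp (-((z / 2 + 2 * π ^ 2 * (n : ℂ) ^ 2 / z) * u))‖ =
      (1 / (z / 2 + 2 * π ^ 2 * (n : ℂ) ^ 2 / z).re) ^ s.re * Real.Gamma s.re := by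
    rw [← Real.integral_rpow_mul_exp_neg_mul_Ioi hs0 hr]
    refine setIntegral_congr_fun measurableSet_Ioi fun u hu => ?_
    rw [norm_cpow_mul_exp hu, neg_re, re_mul_ofReal]
  have hle : c * |(n : ℝ)| ^ 2 ≤ (z / 2 + 2 * π ^ 2 * (n : ℂ) ^ 2 / z).re := by
    rw [re_rate, sq_abs]
    linarith
  have hG := Real.Gamma_pos_of_pos hs0
  rw [Real.norm_of_nonneg (integral_nonneg fun _ => norm_nonneg _), hnorm, mul_right_comm (c ^ _)]
  gcongr
  calc (1 / (z / 2 + 2 * π ^ 2 * (n : ℂ) ^ 2 / z).re) ^ s.re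
      ≤ (1 / (c * |(n : ℝ)| ^ 2)) ^ s.re := by gcongr
    _ = c ^ (-s.re) * |(n : ℝ)| ^ (-(2 * s.re)) := by
      rw [one_div, Real.inv_rpow (by positivity), ← Real.rpow_neg (by positivity),
        Real.mul_rpow hcpos.le (by positivity), ← Real.rpow_natCast, ← Real.rpow_mul hn'.le]
      congr 2
      push_cast
      ring

lemma tsum_int_of_even {f : ℤ → ℂ} (hf : Summable f) (he : ∀ n, f (-n) = f n) :
    ∑' n : ℤ, f n = f 0 + 2 * ∑' n : ℕ, f (n + 1) := by
  rw [tsum_int_eq_zero_add_two_mul_tsum_pnat he hf,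
    tsum_pnat_eq_tsum_succ (f := fun n : ℕ => f n)]
  simp

lemma rate_cpow {z : ℂ} (hz : 0 < z.re) (s : ℂ) (n : ℤ) :
    (z / 2 + 2 * π ^ 2 * (n : ℂ) ^ 2 / z) ^ (-s) =
      (z ^ 2 + 4 * (n : ℂ) ^ 2 * (π : ℂ) ^ 2) ^ (-s) * (2 * z) ^ s := by
  have hz0 : z ≠ 0 := by rintro rfl; simp at hz
  have hr := re_rate_pos hz n
  have hr0 : z / 2 + 2 * π ^ 2 * (n : ℂ) ^ 2 / z ≠ 0 := fun h => by simp [h] at hr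
  have h2z : (2 * z : ℂ) ≠ 0 := mul_ne_zero two_ne_zero hz0
  have hw : z ^ 2 + 4 * (n : ℂ) ^ 2 * (π : ℂ) ^ 2 =
      (z / 2 + 2 * π ^ 2 * (n : ℂ) ^ 2 / z) * (2 * z) := by
    field_simp
    ring
  rw [hw, cpow_def_of_ne_zero hr0, cpow_def_of_ne_zero (mul_ne_zero hr0 h2z),
    cpow_def_of_ne_zero h2z, log_mul_of_re_pos hr (by simpa using hz), ← exp_add]
  ring_nf

lemma constant_identity {z : ℂ} (hz : 0 < z.re) (ν : ℂ) :
    1 / 2 * (z / 2) ^ ν * (2 * π / z) ^ (1 / 2 : ℂ) * (2 * z) ^ (ν + 1 / 2) =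
      Gamma (1 / 2) * z ^ (2 * ν) := by
  have hz0 : z ≠ 0 := by rintro rfl; simp at hz
  have hpi : (π : ℂ) ≠ 0 := ofReal_ne_zero.2 Real.pi_ne_zero
  have h1 : z / 2 = ((2⁻¹ : ℝ) : ℂ) * z := by push_cast; ring
  have h2 : (2 * π / z : ℂ) = ((2 * π : ℝ) : ℂ) * z⁻¹ := by push_cast; rw [div_eq_mul_inv]
  have h3 : 2 * z = ((2 : ℝ) : ℂ) * z := by push_cast; rfl
  have h4 : (1 / 2 : ℂ) = exp (-(Real.log 2 : ℝ)) := by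
    rw [← ofReal_neg, ← ofReal_exp, Real.exp_neg, Real.exp_log two_pos]
    push_cast
    ring
  have e1 : (z / 2) ^ ν = exp ((-(Real.log 2 : ℝ) + log z) * ν) := by
    rw [h1, cpow_def_of_ne_zero (mul_ne_zero (by simp) hz0), log_ofReal_mul (by norm_num) hz0,
      Real.log_inv, ofReal_neg]
  have e2 : (2 * π / z) ^ (1 / 2 : ℂ) =
      exp (((Real.log 2 : ℝ) + (Real.log π : ℝ) - log z) * (1 / 2)) := by
    rw [h2, cpow_def_of_ne_zero (mul_ne_zero (by simp [Real.pi_ne_zero]) (inv_ne_zero hz0)),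
      log_ofReal_mul (by positivity) (inv_ne_zero hz0), log_inv_of_re_pos hz,
      Real.log_mul two_ne_zero Real.pi_ne_zero, ofReal_add, sub_eq_add_neg]
  have e3 : (2 * z) ^ (ν + 1 / 2) = exp (((Real.log 2 : ℝ) + log z) * (ν + 1 / 2)) := by
    rw [h3, cpow_def_of_ne_zero (mul_ne_zero (by simp) hz0), log_ofReal_mul two_pos hz0]
  have e4 : Gamma (1 / 2) = exp ((Real.log π : ℝ) * (1 / 2)) := by
    rw [Complex.Gamma_one_half_eq, cpow_def_of_ne_zero hpi, ofReal_log Real.pi_pos.le]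
  rw [e1, e2, e3, e4, cpow_def_of_ne_zero hz0]
  nth_rewrite 1 [h4]
  simp only [← exp_add]
  congr 1
  ring

end

theorem stmt14 (ν z : ℂ) (hν : 1/2 < ν.re) (hz : 0 < z.re) :
    1/2 * Complex.Gamma ν +
      2 * ∑' n : ℕ, (((n : ℂ) + 1) * z / 2) ^ ν * besselK ν (((n : ℂ) + 1) * z)
      = Complex.Gamma (1/2) * Complex.Gamma (ν + 1/2) * z ^ (2 * ν) *
        (z ^ (-(2 * ν + 1)) +
          2 * ∑' n : ℕ, (z^2 + 4 * ((n : ℂ) + 1)^2 * (π : ℂ)^2) ^ (-(ν + 1/2))) := by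
  have hν0 : 0 < ν.re := by linarith
  have hz0 : z ≠ 0 := by rintro rfl; simp at hz
  have hs : 1 < (ν + 1 / 2).re := by
    have : (ν + 1 / 2).re = ν.re + 1 / 2 := by simp
    linarith
  have hs0 : 0 < (ν + 1 / 2).re := by linarith
  have hz2 : 0 < (z / 2).re := by simpa using hz
  have hsumF := MeasureTheory.hasSum_integral_of_summable_integral_norm
    (fun n : ℤ => integrableOn_bessel_term hν0 hz n) (summable_integral_norm_bessel_term hν0 hz)
  have hsumG := MeasureTheory.hasSum_integral_of_summable_integral_norm
    (fun n : ℤ => integrableOn_cpow_mul_exp_neg_mul hs0 (re_rate_pos hz n))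
    (summable_integral_norm_gamma_term hs hz)
  have htheta := MeasureTheory.setIntegral_congr_fun (μ := MeasureTheory.volume) measurableSet_Ioi
    fun u (hu : u ∈ Set.Ioi (0 : ℝ)) => tsum_exp_neg_theta hz ν hu
  simp only [MeasureTheory.integral_const_mul] at htheta
  rw [← hsumF.tsum_eq, ← hsumG.tsum_eq, tsum_int_of_even hsumF.summable (by simp),
    tsum_int_of_even hsumG.summable (by simp)] at htheta
  simp only [integral_cpow_mul_exp_neg_mul_of_re_pos hs0 (re_rate_pos hz _),
    rate_cpow hz, mul_assoc _ _ (Complex.Gamma _), tsum_mul_right] at htheta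
  have hzero : ∫ u : ℝ in Set.Ioi 0, (u : ℂ) ^ (ν - 1) *
      Complex.exp (-(z / 2 * (u + ((0 : ℤ) : ℂ) ^ 2 * (u : ℂ)⁻¹))) =
      (z / 2) ^ (-ν) * Complex.Gamma ν := by
    rw [← integral_cpow_mul_exp_neg_mul_of_re_pos hν0 hz2]
    simp
  have hpow : (z ^ 2 + 4 * ((0 : ℤ) : ℂ) ^ 2 * (π : ℂ) ^ 2) ^ (-(ν + 1 / 2)) =
      z ^ (-(2 * ν + 1)) := by
    have h : z ^ 2 + 4 * ((0 : ℤ) : ℂ) ^ 2 * (π : ℂ) ^ 2 = z * z := by simp [sq]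
    rw [h, Complex.cpow_def_of_ne_zero (mul_ne_zero hz0 hz0), Complex.cpow_def_of_ne_zero hz0,
      log_mul_of_re_pos hz hz]
    ring_nf
  have hK (n : ℕ) := cpow_mul_besselK hν0 hz (m := (n : ℝ) + 1) (by positivity)
  push_cast at hK htheta
  have hcancel : (z / 2) ^ ν * (z / 2) ^ (-ν) = 1 := by
    rw [← Complex.cpow_add _ _ (div_ne_zero hz0 two_ne_zero), add_neg_cancel, Complex.cpow_zero]
  push_cast at hzero hpow
  simp only [hK, tsum_mul_left]
  rw [hzero, hpow] at htheta
  linear_combination (1 / 2 * (z / 2) ^ ν) * htheta - (1 / 2 * Complex.Gamma ν) * hcancel +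
    Complex.Gamma (ν + 1 / 2) * (z ^ (-(2 * ν + 1)) +
      2 * ∑' n : ℕ, (z^2 + 4 * ((n : ℂ) + 1)^2 * (π : ℂ)^2) ^ (-(ν + 1/2))) *
      constant_identity hz ν
end

section
/- Let β ∈ ℂ with Re(β) > 0. Then 2 Σ_{n=1}^∞ K_0(nβ) = π·( 1/β + 2 Σ_{n=1}^∞ ( 1/√(β² + 4π²n²) − 1/(2nπ) ) ) + γ + log(β/2) − log(2π). -/
open scoped Real

/-- Principal branch complex square root. -/
noncomputable def csqrt (z : ℂ) : ℂ := z ^ ((1 : ℂ)/2)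

section helpers

open Filter Topology MeasureTheory Set

lemma csqrt_sq (z : ℂ) : csqrt z ^ 2 = z := by
  have h := Complex.cpow_nat_inv_pow z (n := 2) two_ne_zero
  simpa only [csqrt, one_div, Nat.cast_ofNat] using h

lemma csqrt_re_pos {z : ℂ} (hz : z ∈ Complex.slitPlane) : 0 < (csqrt z).re := by
  have h0 : z ≠ 0 := Complex.slitPlane_ne_zero hz
  have harg : z.arg ≠ π := (Complex.mem_slitPlane_iff_arg.1 hz).1
  have h1 := Complex.neg_pi_lt_arg z
  have h2 := lt_of_le_of_ne (Complex.arg_le_pi z) harg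
  rw [csqrt, Complex.cpow_def_of_ne_zero h0, Complex.exp_re]
  refine mul_pos (Real.exp_pos _) (Real.cos_pos_of_mem_Ioo ⟨?_, ?_⟩)
  · simp [Complex.log_im, Complex.mul_im]; linarith
  · simp [Complex.log_im, Complex.mul_im]; linarith

lemma csqrt_eq_of_sq_eq {a z : ℂ} (ha : 0 < a.re) (hz : z ∈ Complex.slitPlane) (h : a ^ 2 = z) :
    csqrt z = a := by
  rcases sq_eq_sq_iff_eq_or_eq_neg.1 ((csqrt_sq z).trans h.symm) with h' | h'
  · exact h'
  · have := csqrt_re_pos hz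
    rw [h', Complex.neg_re] at this
    linarith

lemma hasDerivAt_csqrt {z : ℂ} (hz : z ∈ Complex.slitPlane) :
    HasDerivAt csqrt (1 / (2 * csqrt z)) z := by
  have h := (hasDerivAt_id z).cpow_const (c := (1 : ℂ) / 2) (by simpa using hz)
  have h0 : csqrt z ≠ 0 := fun h0 => by simpa [h0] using csqrt_re_pos hz
  refine h.congr_deriv ?_
  have hz0 := Complex.slitPlane_ne_zero hz
  have h1 : (id z) ^ ((1 : ℂ) / 2 - 1) = csqrt z / z := by
    rw [id, Complex.cpow_sub _ _ (Complex.slitPlane_ne_zero hz)]; simp [csqrt]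
  rw [h1]
  field_simp
  exact csqrt_sq z

/-- The squares of the open right half-plane avoid the branch cut, even after adding a nonnegative
real number. -/
lemma sq_add_mem_slitPlane {w : ℂ} (hw : 0 < w.re) {r : ℝ} (hr : 0 ≤ r) :
    w ^ 2 + r ∈ Complex.slitPlane := by
  rw [Complex.mem_slitPlane_iff]
  by_cases h : w.im = 0
  · left; simp [pow_two, h]; positivity
  · right; simp [pow_two]; ring_nf; simp [h, hw.ne']

lemma div_re_pos_of_sq_eq {w s : ℂ} (hw : 0 < w.re) (hs : 0 < s.re) {r : ℝ}
    (h : s ^ 2 = w ^ 2 + r) : 0 < (w / s).re := by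
  have him := congrArg Complex.im h
  simp only [pow_two, Complex.mul_im, Complex.add_im, Complex.ofReal_im] at him
  have h1 : s.re * s.im = w.re * w.im := by linarith
  have h2 : 0 ≤ w.im * s.im := by
    have h3 : s.im = w.re * w.im / s.re := by field_simp; linarith
    rw [h3]
    have : w.im * (w.re * w.im / s.re) = w.re / s.re * w.im ^ 2 := by ring
    rw [this]; positivity
  have hs0 : 0 < Complex.normSq s := Complex.normSq_pos.2 (fun h0 => by simp [h0] at hs)
  rw [Complex.div_re]
  have := mul_pos hw hs
  rw [← add_div]; apply div_pos _ hs0; linarith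

/-- A primitive of `s ↦ 1 / (1 + q ^ 2 * s ^ 2)` on `[0, ∞)`, for `q` in the right half-plane. -/
noncomputable def arctanPrimitive (q : ℂ) (s : ℝ) : ℂ :=
  (Complex.log (1 + Complex.I * q * s) - Complex.log (1 - Complex.I * q * s)) / (2 * Complex.I * q)

lemma one_add_I_mul_mem_slitPlane {q : ℂ} (hq : 0 < q.re) {s : ℝ} (hs : 0 ≤ s) :
    1 + Complex.I * q * s ∈ Complex.slitPlane := by
  rw [Complex.mem_slitPlane_iff]
  rcases hs.eq_or_lt with rfl | h
  · simp
  · right; simp [hq.ne', h.ne']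

lemma one_sub_I_mul_mem_slitPlane {q : ℂ} (hq : 0 < q.re) {s : ℝ} (hs : 0 ≤ s) :
    1 - Complex.I * q * s ∈ Complex.slitPlane := by
  rw [Complex.mem_slitPlane_iff]
  rcases hs.eq_or_lt with rfl | h
  · simp
  · right; simp [hq.ne', h.ne']

lemma hasDerivAt_arctanPrimitive {q : ℂ} (hq : 0 < q.re) {s : ℝ} (hs : 0 ≤ s) :
    HasDerivAt (arctanPrimitive q) (1 / (1 + q ^ 2 * s ^ 2)) s := by
  have hq0 : q ≠ 0 := fun h => by simp [h] at hq
  have m1 := one_add_I_mul_mem_slitPlane hq hs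
  have m2 := one_sub_I_mul_mem_slitPlane hq hs
  have d0 : HasDerivAt (fun s : ℝ => Complex.I * q * s) (Complex.I * q) s := by
    simpa using (Complex.ofRealCLM.hasDerivAt (x := s)).const_mul (Complex.I * q)
  have d1 := (d0.const_add 1).clog_real m1
  have d2 := (d0.const_sub 1).clog_real m2
  have n1 := Complex.slitPlane_ne_zero m1
  have n2 := Complex.slitPlane_ne_zero m2
  have key : (1 + Complex.I * q * s) * (1 - Complex.I * q * s) = 1 + q ^ 2 * s ^ 2 := by
    ring_nf; simp
  refine ((d1.sub d2).div_const (2 * Complex.I * q)).congr_deriv ?_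
  rw [← key]
  field_simp
  ring

lemma log_neg_of_im_pos {z : ℂ} (hz : 0 < z.im) :
    Complex.log z - Complex.log (-z) = Complex.I * π := by
  apply Complex.ext
  · simp [Complex.log_re]
  · simp [Complex.log_im, Complex.arg_neg_eq_arg_sub_pi_of_im_pos hz]

lemma tendsto_arctanPrimitive {q : ℂ} (hq : 0 < q.re) :
    Tendsto (arctanPrimitive q) atTop (𝓝 (π / (2 * q))) := by
  have hq0 : q ≠ 0 := fun h => by simp [h] at hq
  have him : 0 < (Complex.I * q).im := by simpa using hq
  have hinv : Tendsto (fun s : ℝ => ((s⁻¹ : ℝ) : ℂ)) atTop (𝓝 0) := by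
    simpa [Function.comp_def] using
      (Complex.continuous_ofReal.tendsto 0).comp (tendsto_inv_atTop_zero (𝕜 := ℝ))
  have t1 : Tendsto (fun s : ℝ => Complex.log ((s⁻¹ : ℝ) + Complex.I * q)) atTop
      (𝓝 (Complex.log (Complex.I * q))) := by
    refine Tendsto.clog ?_ (Or.inr him.ne')
    simpa using hinv.add_const (Complex.I * q)
  have t2 : Tendsto (fun s : ℝ => Complex.log ((s⁻¹ : ℝ) - Complex.I * q)) atTop
      (𝓝 (Complex.log (-(Complex.I * q)))) := by
    refine Tendsto.clog ?_ (Or.inr (by simpa using hq.ne'))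
    simpa using hinv.sub_const (Complex.I * q)
  have t := (t1.sub t2).div_const (2 * Complex.I * q)
  rw [log_neg_of_im_pos him] at t
  have e : Complex.I * π / (2 * Complex.I * q) = π / (2 * q) := by
    field_simp
  rw [e] at t
  refine t.congr' ?_
  filter_upwards [eventually_gt_atTop 0] with s hs
  have hs0 : (s : ℂ) ≠ 0 := by exact_mod_cast hs.ne'
  have e1 : 1 + Complex.I * q * s = s * ((s⁻¹ : ℝ) + Complex.I * q) := by
    push_cast; field_simp
  have e2 : 1 - Complex.I * q * s = s * ((s⁻¹ : ℝ) - Complex.I * q) := by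
    push_cast; field_simp
  have n1 : ((s⁻¹ : ℝ) + Complex.I * q : ℂ) ≠ 0 := fun h => by
    have := congrArg Complex.im h; simp at this; exact hq.ne' this
  have n2 : ((s⁻¹ : ℝ) - Complex.I * q : ℂ) ≠ 0 := fun h => by
    have := congrArg Complex.im h; simp at this; exact hq.ne' this
  rw [arctanPrimitive, e1, e2, Complex.log_ofReal_mul hs n1, Complex.log_ofReal_mul hs n2]
  ring

lemma arctanPrimitive_zero (q : ℂ) : arctanPrimitive q 0 = 0 := by simp [arctanPrimitive]

lemma sq_norm_add_le {w : ℂ} {δ : ℝ} (hδ : 0 < δ) (hw : δ * ‖w‖ ≤ w.re) {y : ℝ} (hy : 0 ≤ y) :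
    (‖w‖ + y) ^ 2 ≤ (1 + 2 / δ) ^ 2 * ‖w ^ 2 + (y : ℂ) ^ 2‖ := by
  have key : ∀ z : ℂ, z.re = w.re → y ≤ ‖z‖ + ‖w‖ → ‖w‖ + y ≤ (1 + 2 / δ) * ‖z‖ := by
    intro z hz hyz
    have h1 : ‖w‖ ≤ ‖z‖ / δ := by
      rw [le_div_iff₀ hδ, mul_comm]
      exact hw.trans (hz ▸ Complex.re_le_norm z)
    have : (1 + 2 / δ) * ‖z‖ = ‖z‖ + 2 * (‖z‖ / δ) := by ring
    linarith
  have hyn : ‖Complex.I * y‖ = y := by simp [abs_of_nonneg hy]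
  have k1 := key (w + Complex.I * y) (by simp) (by
    have := norm_sub_le (w + Complex.I * y) w
    rwa [add_sub_cancel_left, hyn] at this)
  have k2 := key (w - Complex.I * y) (by simp) (by
    have := norm_sub_le (w - Complex.I * y) w
    rwa [sub_sub_cancel_left, norm_neg, hyn] at this)
  have e : w ^ 2 + (y : ℂ) ^ 2 = (w + Complex.I * y) * (w - Complex.I * y) := by
    ring_nf; simp
  rw [e, norm_mul]
  have := mul_le_mul k1 k2 (by positivity) (by positivity)
  nlinarith [this]

/-- The summands `2 w / (w ^ 2 + (2 π x) ^ 2)` of the partial fraction expansion of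
`w ↦ 1 / (exp w - 1)`. -/
noncomputable def partialFraction (w : ℂ) (x : ℝ) : ℂ :=
  2 * w / (w ^ 2 + ((2 * π * x : ℝ) : ℂ) ^ 2)

lemma sq_add_sq_ne_zero {w : ℂ} (hw : 0 < w.re) (y : ℝ) : w ^ 2 + (y : ℂ) ^ 2 ≠ 0 := by
  have := Complex.slitPlane_ne_zero (sq_add_mem_slitPlane hw (sq_nonneg y))
  exact_mod_cast this

lemma continuous_partialFraction {w : ℂ} (hw : 0 < w.re) : Continuous (partialFraction w) := by
  unfold partialFraction
  exact Continuous.div (by fun_prop) (by fun_prop) fun x => sq_add_sq_ne_zero hw _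

lemma norm_inv_sq_add_sq_le {w : ℂ} (hw : 0 < w.re) {C : ℝ}
    (hC : ∀ y : ℝ, 0 ≤ y → (‖w‖ + y) ^ 2 ≤ C * ‖w ^ 2 + (y : ℂ) ^ 2‖)
    {y : ℝ} (hy : 0 ≤ y) : ‖(w ^ 2 + (y : ℂ) ^ 2)⁻¹‖ ≤ C / (‖w‖ + y) ^ 2 := by
  have hw0 : 0 < ‖w‖ := norm_pos_iff.2 fun h => by simp [h] at hw
  have hn : 0 < ‖w ^ 2 + (y : ℂ) ^ 2‖ := norm_pos_iff.2 (sq_add_sq_ne_zero hw y)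
  rw [norm_inv, inv_eq_one_div, div_le_div_iff₀ hn (by positivity), one_mul]
  exact hC y hy

lemma norm_partialFraction_le {w : ℂ} (hw : 0 < w.re) {C : ℝ}
    (hC : ∀ y : ℝ, 0 ≤ y → (‖w‖ + y) ^ 2 ≤ C * ‖w ^ 2 + (y : ℂ) ^ 2‖)
    {x : ℝ} (hx : 0 ≤ x) : ‖partialFraction w x‖ ≤ 2 * C / ‖w‖ := by
  have hw0 : 0 < ‖w‖ := norm_pos_iff.2 fun h => by simp [h] at hw
  have hy : 0 ≤ 2 * π * x := by positivity
  have h := norm_inv_sq_add_sq_le hw hC hy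
  have hC0 : 0 ≤ C := by
    have := (norm_nonneg _).trans h
    exact (div_nonneg_iff.1 this).elim (·.1) fun h' => by
      have : 0 < (‖w‖ + 2 * π * x) ^ 2 := by positivity
      linarith [h'.2]
  rw [partialFraction, div_eq_mul_inv, norm_mul, norm_mul, Complex.norm_ofNat]
  calc 2 * ‖w‖ * _ ≤ 2 * ‖w‖ * (C / (‖w‖ + 2 * π * x) ^ 2) := by gcongr
    _ ≤ 2 * ‖w‖ * (C / ‖w‖ ^ 2) := by gcongr; linarith
    _ = 2 * C / ‖w‖ := by field_simp

lemma norm_partialFraction_sub_le {w : ℂ} (hw : 0 < w.re) {C : ℝ}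
    (hC : ∀ y : ℝ, 0 ≤ y → (‖w‖ + y) ^ 2 ≤ C * ‖w ^ 2 + (y : ℂ) ^ 2‖)
    {x y : ℝ} (hx : 0 ≤ x) (hxy : x ≤ y) :
    ‖partialFraction w y - partialFraction w x‖ ≤
      2 * C ^ 2 * (1 / (‖w‖ + 2 * π * x) - 1 / (‖w‖ + 2 * π * y)) := by
  have hw0 : 0 < ‖w‖ := norm_pos_iff.2 fun h => by simp [h] at hw
  unfold partialFraction
  have hab : 2 * π * x ≤ 2 * π * y := by gcongr
  have ha : 0 ≤ 2 * π * x := by positivity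
  generalize 2 * π * x = a at *
  generalize 2 * π * y = b at *
  have hb : 0 ≤ b := ha.trans hab
  have na := norm_inv_sq_add_sq_le hw hC ha
  have nb := norm_inv_sq_add_sq_le hw hC hb
  have e : 2 * w / (w ^ 2 + (b : ℂ) ^ 2) - 2 * w / (w ^ 2 + (a : ℂ) ^ 2) =
      2 * w * (((a - b) * (a + b) : ℝ) : ℂ) *
        ((w ^ 2 + (a : ℂ) ^ 2)⁻¹ * (w ^ 2 + (b : ℂ) ^ 2)⁻¹) := by
    have h1 := sq_add_sq_ne_zero hw a
    have h2 := sq_add_sq_ne_zero hw b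
    push_cast
    field_simp
    ring
  rw [e, norm_mul, norm_mul, norm_mul, norm_mul, Complex.norm_ofNat, Complex.norm_real,
    Real.norm_eq_abs, abs_mul, abs_of_nonpos (by linarith : a - b ≤ 0),
    abs_of_nonneg (by linarith : 0 ≤ a + b)]
  have hwab : ‖w‖ * (a + b) ≤ (‖w‖ + a) * (‖w‖ + b) := by
    nlinarith [mul_nonneg ha hb, sq_nonneg ‖w‖]
  have hba : 0 ≤ -(a - b) := by linarith
  calc 2 * ‖w‖ * (-(a - b) * (a + b)) * (‖(w ^ 2 + (a : ℂ) ^ 2)⁻¹‖ * ‖(w ^ 2 + (b : ℂ) ^ 2)⁻¹‖)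
      ≤ 2 * ‖w‖ * (-(a - b) * (a + b)) * (C / (‖w‖ + a) ^ 2 * (C / (‖w‖ + b) ^ 2)) := by
        gcongr
        exact (norm_nonneg _).trans na
    _ = ‖w‖ * (a + b) * (2 * C ^ 2 * (-(a - b)) / ((‖w‖ + a) ^ 2 * (‖w‖ + b) ^ 2)) := by
        field_simp
    _ ≤ (‖w‖ + a) * (‖w‖ + b) * (2 * C ^ 2 * (-(a - b)) / ((‖w‖ + a) ^ 2 * (‖w‖ + b) ^ 2)) := by
        gcongr
    _ = 2 * C ^ 2 * (1 / (‖w‖ + a) - 1 / (‖w‖ + b)) := by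
        field_simp
        ring

/-- The error in approximating `∫ x in 0..N, partialFraction w x` by its Riemann sum, plus
the term `1 / w` of the partial fraction expansion. -/
noncomputable def partialFractionRemainder (N : ℕ) (w : ℂ) : ℂ :=
  1 / w + ∑ k ∈ Finset.range N, partialFraction w ((k : ℝ) + 1) -
    ∫ x in (0 : ℝ)..N, partialFraction w x

lemma norm_partialFractionRemainder_le {w : ℂ} (hw : 0 < w.re) {C : ℝ}
    (hC : ∀ y : ℝ, 0 ≤ y → (‖w‖ + y) ^ 2 ≤ C * ‖w ^ 2 + (y : ℂ) ^ 2‖) (N : ℕ) :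
    ‖partialFractionRemainder N w‖ ≤ (1 + 2 * C ^ 2) / ‖w‖ := by
  have hw0 : 0 < ‖w‖ := norm_pos_iff.2 fun h => by simp [h] at hw
  have hcont := continuous_partialFraction hw
  have hsum := intervalIntegral.sum_integral_adjacent_intervals (μ := volume)
    (f := partialFraction w) (a := fun k : ℕ => (k : ℝ)) (n := N)
    fun k _ => hcont.intervalIntegrable _ _
  simp only [Nat.cast_zero] at hsum
  have hterm : ∀ k : ℕ, ‖partialFraction w ((k : ℝ) + 1) -
      ∫ x in (k : ℝ)..((k + 1 : ℕ) : ℝ), partialFraction w x‖ ≤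
      2 * C ^ 2 * (1 / (‖w‖ + 2 * π * k)) - 2 * C ^ 2 * (1 / (‖w‖ + 2 * π * (k + 1 : ℕ))) := by
    intro k
    have e : partialFraction w ((k : ℝ) + 1) -
        ∫ x in (k : ℝ)..((k + 1 : ℕ) : ℝ), partialFraction w x =
        ∫ x in (k : ℝ)..((k + 1 : ℕ) : ℝ),
          (partialFraction w ((k : ℝ) + 1) - partialFraction w x) := by
      rw [intervalIntegral.integral_sub (by simp) (hcont.intervalIntegrable _ _)]
      simp
    rw [e, ← mul_sub]
    refine (intervalIntegral.norm_integral_le_of_norm_le_const (C := 2 * C ^ 2 *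
      (1 / (‖w‖ + 2 * π * k) - 1 / (‖w‖ + 2 * π * (k + 1 : ℕ)))) fun x hx => ?_).trans ?_
    · rw [uIoc_of_le (by push_cast; linarith)] at hx
      have hk : (0 : ℝ) ≤ k := k.cast_nonneg
      have hx2 := hx.2
      push_cast at hx2 ⊢
      refine (norm_partialFraction_sub_le hw hC (hk.trans hx.1.le) hx2).trans ?_
      gcongr
      exact hx.1.le
    · simp
  rw [partialFractionRemainder, ← hsum, add_sub_assoc, ← Finset.sum_sub_distrib]
  refine (norm_add_le _ _).trans ?_
  have h1 := (norm_sum_le _ _).trans (Finset.sum_le_sum fun k (_ : k ∈ Finset.range N) => hterm k)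
  rw [Finset.sum_range_sub'] at h1
  have h2 : 0 ≤ 2 * C ^ 2 * (1 / (‖w‖ + 2 * π * (N : ℕ))) := by positivity
  have h3 : ‖1 / w‖ = 1 / ‖w‖ := by simp
  rw [h3, add_div, mul_div_assoc]
  simp only [Nat.cast_zero, mul_zero, add_zero] at h1
  have h4 : 2 * C ^ 2 * (1 / ‖w‖) = 2 * (C ^ 2 / ‖w‖) := by ring
  linarith

/-- The partial fraction expansion of `w ↦ 1 / (exp w - 1)` in the right half-plane. -/
lemma tendsto_partialFractionRemainder {w : ℂ} (hw : 0 < w.re) :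
    Tendsto (fun N => partialFractionRemainder N w) atTop (𝓝 (1 / (Complex.exp w - 1))) := by
  have hw0 : w ≠ 0 := fun h => by simp [h] at hw
  have hpi : (π : ℂ) ≠ 0 := by exact_mod_cast Real.pi_ne_zero
  have hI := Complex.I_ne_zero
  set z : ℂ := Complex.I * w / (2 * π) with hz
  have hz0 : z ≠ 0 := by
    rw [hz]
    exact div_ne_zero (mul_ne_zero hI hw0) (mul_ne_zero two_ne_zero hpi)
  have hzim : z.im ≠ 0 := by
    have : z = ((1 / (2 * π) : ℝ) : ℂ) * (Complex.I * w) := by rw [hz]; push_cast; ring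
    rw [this, Complex.im_ofReal_mul]
    simp [hw.ne', Real.pi_ne_zero]
  have hzZ : z ∈ Complex.integerComplement := by
    rw [Complex.mem_integerComplement_iff]
    rintro ⟨n, hn⟩
    apply hzim
    rw [← hn]; simp
  have hcot := (tendsto_logDeriv_euler_cot_sub hzZ).const_mul (Complex.I / (2 * π))
  have hterm : ∀ k : ℕ, Complex.I / (2 * π) * cotTerm z k = partialFraction w ((k : ℝ) + 1) := by
    intro k
    rw [cotTerm_identity hzZ, partialFraction]
    have h1 := sq_add_sq_ne_zero hw (2 * π * ((k : ℝ) + 1))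
    push_cast at h1 ⊢
    have h2 : (z + (k + 1)) * (z - (k + 1)) =
        -(w ^ 2 + (2 * π * ((k : ℂ) + 1)) ^ 2) / (2 * π) ^ 2 := by
      rw [hz]; field_simp; ring_nf; simp
    rw [h2, hz]
    field_simp
    simp [neg_div]
  have hint : Tendsto (fun N : ℕ => ∫ x in (0 : ℝ)..N, partialFraction w x) atTop (𝓝 (1 / 2)) := by
    have hq : 0 < ((2 * π : ℝ) / w : ℂ).re := by
      rw [Complex.div_re]
      have : 0 < Complex.normSq w := Complex.normSq_pos.2 hw0
      simp
      positivity
    have hd : ∀ x : ℝ, 0 ≤ x → HasDerivAt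
        (fun s : ℝ => 2 / w * arctanPrimitive ((2 * π : ℝ) / w) s) (partialFraction w x) x := by
      intro x hx
      refine ((hasDerivAt_arctanPrimitive hq hx).const_mul (2 / w)).congr_deriv ?_
      have h1 := sq_add_sq_ne_zero hw (2 * π * x)
      rw [partialFraction]
      have h2 : 1 + ((2 * π : ℝ) / w : ℂ) ^ 2 * (x : ℂ) ^ 2 =
          (w ^ 2 + ((2 * π * x : ℝ) : ℂ) ^ 2) / w ^ 2 := by
        push_cast; field_simp
      rw [h2]
      field_simp
    have he : ∀ N : ℕ, ∫ x in (0 : ℝ)..N, partialFraction w x =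
        2 / w * arctanPrimitive ((2 * π : ℝ) / w) N := by
      intro N
      rw [intervalIntegral.integral_eq_sub_of_hasDerivAt
        (f := fun s : ℝ => 2 / w * arctanPrimitive ((2 * π : ℝ) / w) s)
        (fun x hx => hd x ?_) ((continuous_partialFraction hw).intervalIntegrable _ _)]
      · simp [arctanPrimitive_zero]
      · rw [uIcc_of_le N.cast_nonneg] at hx; exact hx.1
    simp_rw [he]
    have := ((tendsto_arctanPrimitive hq).comp tendsto_natCast_atTop_atTop).const_mul (2 / w)
    have e : 2 / w * (π / (2 * ((2 * π : ℝ) / w))) = 1 / 2 := by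
      push_cast
      field_simp
    rwa [e] at this
  have hexp : Complex.exp w - 1 ≠ 0 := by
    intro h
    have := congrArg norm (sub_eq_zero.1 h)
    rw [Complex.norm_exp, norm_one, Real.exp_eq_one_iff] at this
    exact hw.ne' this
  have hlim : 1 / w + Complex.I / (2 * π) * (π * Complex.cot (π * z) - 1 / z) - 1 / 2 =
      1 / (Complex.exp w - 1) := by
    rw [Complex.cot_pi_eq_exp_ratio]
    have h1 : 2 * π * Complex.I * z = -w := by
      rw [hz]; field_simp; simp
    rw [h1, Complex.exp_neg, hz]
    have he := Complex.exp_ne_zero w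
    have h2 : 1 - (Complex.exp w)⁻¹ ≠ 0 := by
      intro h; apply hexp; field_simp at h; simpa using h
    field_simp
    ring_nf
  rw [← hlim]
  unfold partialFractionRemainder
  refine Tendsto.sub ?_ hint
  refine Tendsto.const_add _ (hcot.congr fun N => ?_)
  rw [Finset.mul_sum]
  exact Finset.sum_congr rfl fun k _ => hterm k

lemma one_div_exp_sub_one_le {x : ℝ} (hx : 0 < x) : 1 / (Real.exp x - 1) ≤ 1 / x :=
  one_div_le_one_div_of_le hx (by linarith [Real.add_one_le_exp x])

lemma integrableOn_inv_cosh : IntegrableOn (fun t : ℝ => 1 / Real.cosh t) (Ioi 0) := by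
  have h := (exp_neg_integrableOn_Ioi 0 one_pos).const_mul 2
  refine Integrable.mono' h ?_ (ae_of_all _ fun t => ?_)
  · exact (Continuous.div continuous_const Real.continuous_cosh
      fun t => (Real.cosh_pos t).ne').aestronglyMeasurable
  · rw [Real.norm_of_nonneg (one_div_nonneg.2 (Real.cosh_pos t).le), div_le_iff₀ (Real.cosh_pos t),
      Real.cosh_eq]
    have : Real.exp (-1 * t) * Real.exp t = 1 := by rw [← Real.exp_add]; simp
    have h2 : 0 ≤ Real.exp (-1 * t) * Real.exp (-t) := by positivity
    linarith

lemma tendsto_sinh_atTop : Tendsto Real.sinh atTop atTop :=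
  tendsto_atTop_mono' atTop
    ((eventually_ge_atTop 0).mono fun _ h => Real.self_le_sinh_iff.2 h) tendsto_id

lemma mul_cosh_re_pos {β : ℂ} (hβ : 0 < β.re) (t : ℝ) : 0 < (β * Real.cosh t).re := by
  rw [Complex.re_mul_ofReal]
  exact mul_pos hβ (Real.cosh_pos t)

lemma exists_sq_norm_add_le {β : ℂ} (hβ : 0 < β.re) :
    ∃ C : ℝ, 0 < C ∧ ∀ r : ℝ, 0 ≤ r → ∀ y : ℝ, 0 ≤ y →
    (‖β * r‖ + y) ^ 2 ≤ C * ‖(β * r) ^ 2 + (y : ℂ) ^ 2‖ := by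
  have h0 : 0 < ‖β‖ := norm_pos_iff.2 fun h => by simp [h] at hβ
  refine ⟨(1 + 2 / (β.re / ‖β‖)) ^ 2, by positivity, fun r hr y hy => ?_⟩
  refine sq_norm_add_le (by positivity) ?_ hy
  rw [norm_mul, Complex.norm_real, Real.norm_of_nonneg hr, Complex.re_mul_ofReal]
  apply le_of_eq
  field_simp

lemma continuous_partialFraction_mul_cosh {β : ℂ} (hβ : 0 < β.re) :
    Continuous fun p : ℝ × ℝ => partialFraction (β * Real.cosh p.2) p.1 := by
  unfold partialFraction
  refine Continuous.div ?_ ?_ fun p => sq_add_sq_ne_zero (mul_cosh_re_pos hβ p.2) _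
  · fun_prop
  · fun_prop

lemma exists_norm_partialFraction_le {β : ℂ} (hβ : 0 < β.re) : ∃ C : ℝ, 0 < C ∧ ∀ t x : ℝ, 0 ≤ x →
    ‖partialFraction (β * Real.cosh t) x‖ ≤ C * (1 / Real.cosh t) := by
  obtain ⟨C, hC0, hC⟩ := exists_sq_norm_add_le hβ
  have h0 : 0 < ‖β‖ := norm_pos_iff.2 fun h => by simp [h] at hβ
  refine ⟨2 * C / ‖β‖, by positivity, fun t x hx => ?_⟩
  refine (norm_partialFraction_le (mul_cosh_re_pos hβ t)
    (hC _ (Real.cosh_pos t).le) hx).trans (le_of_eq ?_)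
  rw [norm_mul, Complex.norm_real, Real.norm_of_nonneg (Real.cosh_pos t).le]
  field_simp

lemma integrableOn_partialFraction {β : ℂ} (hβ : 0 < β.re) {x : ℝ} (hx : 0 ≤ x) :
    IntegrableOn (fun t : ℝ => partialFraction (β * Real.cosh t) x) (Ioi 0) := by
  obtain ⟨C, -, hC⟩ := exists_norm_partialFraction_le hβ
  refine Integrable.mono' (integrableOn_inv_cosh.const_mul C) ?_ (ae_of_all _ fun t => hC t x hx)
  exact ((continuous_partialFraction_mul_cosh hβ).comp
    (Continuous.prodMk_right x)).aestronglyMeasurable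

lemma integral_partialFraction {β : ℂ} (hβ : 0 < β.re) {x : ℝ} (hx : 0 ≤ x) :
    ∫ t in Ioi (0 : ℝ), partialFraction (β * Real.cosh t) x =
      π / csqrt (β ^ 2 + ((2 * π * x : ℝ) : ℂ) ^ 2) := by
  set S := csqrt (β ^ 2 + ((2 * π * x : ℝ) : ℂ) ^ 2) with hS
  have hβ0 : β ≠ 0 := fun h => by simp [h] at hβ
  have hmem := sq_add_mem_slitPlane hβ (sq_nonneg (2 * π * x))
  rw [Complex.ofReal_pow] at hmem
  have hSre : 0 < S.re := csqrt_re_pos hmem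
  have hS0 : S ≠ 0 := fun h => by simp [h] at hSre
  have hSsq : S ^ 2 = β ^ 2 + ((2 * π * x : ℝ) : ℂ) ^ 2 := csqrt_sq _
  have hq : 0 < (β / S).re :=
    div_re_pos_of_sq_eq hβ hSre (r := (2 * π * x) ^ 2) (by rw [hSsq, Complex.ofReal_pow])
  have hd : ∀ t ∈ Ici (0 : ℝ), HasDerivAt
      (fun t => 2 * β / S ^ 2 * arctanPrimitive (β / S) (Real.sinh t))
      (partialFraction (β * Real.cosh t) x) t := by
    intro t ht
    have h := ((hasDerivAt_arctanPrimitive hq (Real.sinh_nonneg_iff.2 ht)).scomp t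
      (Real.hasDerivAt_sinh t)).const_mul (2 * β / S ^ 2)
    refine h.congr_deriv ?_
    have h1 := sq_add_sq_ne_zero (mul_cosh_re_pos hβ t) (2 * π * x)
    have hch : (Real.cosh t : ℂ) ^ 2 = (Real.sinh t : ℂ) ^ 2 + 1 := by
      exact_mod_cast Real.cosh_sq t
    have h2 : 1 + (β / S) ^ 2 * (Real.sinh t : ℂ) ^ 2 =
        ((β * Real.cosh t) ^ 2 + ((2 * π * x : ℝ) : ℂ) ^ 2) / S ^ 2 := by
      field_simp
      rw [hSsq, hch]
      ring
    rw [h2, partialFraction, Complex.real_smul]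
    field_simp
  have ht : Tendsto (fun t => 2 * β / S ^ 2 * arctanPrimitive (β / S) (Real.sinh t)) atTop
      (𝓝 (π / S)) := by
    have h := ((tendsto_arctanPrimitive hq).comp tendsto_sinh_atTop).const_mul (2 * β / S ^ 2)
    have e : 2 * β / S ^ 2 * (π / (2 * (β / S))) = π / S := by field_simp
    rwa [e] at h
  rw [integral_Ioi_of_hasDerivAt_of_tendsto' hd (integrableOn_partialFraction hβ hx) ht]
  simp [arctanPrimitive_zero]

lemma integrable_partialFraction_prod {β : ℂ} (hβ : 0 < β.re) (N : ℕ) :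
    Integrable (Function.uncurry fun x t : ℝ => partialFraction (β * Real.cosh t) x)
      ((volume.restrict (uIoc (0 : ℝ) N)).prod (volume.restrict (Ioi 0))) := by
  obtain ⟨C, -, hC⟩ := exists_norm_partialFraction_le hβ
  have : IsFiniteMeasure (volume.restrict (uIoc (0 : ℝ) N)) :=
    ⟨by rw [uIoc_of_le N.cast_nonneg]; simp⟩
  refine Integrable.mono' (Integrable.comp_snd (integrableOn_inv_cosh.const_mul C) _)
    (continuous_partialFraction_mul_cosh hβ).aestronglyMeasurable ?_
  rw [Measure.prod_restrict]
  refine ae_restrict_of_forall_mem (measurableSet_uIoc.prod measurableSet_Ioi) fun p hp => ?_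
  rw [uIoc_of_le N.cast_nonneg] at hp
  exact hC _ _ hp.1.1.le

lemma integral_pi_div_csqrt {β : ℂ} (hβ : 0 < β.re) (N : ℕ) :
    ∫ x in (0 : ℝ)..N, π / csqrt (β ^ 2 + ((2 * π * x : ℝ) : ℂ) ^ 2) =
      (Complex.log (((2 * π * N : ℝ) : ℂ) + csqrt (β ^ 2 + ((2 * π * N : ℝ) : ℂ) ^ 2)) -
        Complex.log β) / 2 := by
  have hmem : ∀ y : ℝ, β ^ 2 + (y : ℂ) ^ 2 ∈ Complex.slitPlane := fun y => by
    exact_mod_cast sq_add_mem_slitPlane hβ (sq_nonneg y)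
  have hd : ∀ x : ℝ, 0 ≤ x → HasDerivAt (fun x : ℝ => Complex.log (((2 * π * x : ℝ) : ℂ) +
      csqrt (β ^ 2 + ((2 * π * x : ℝ) : ℂ) ^ 2)) / 2)
      (π / csqrt (β ^ 2 + ((2 * π * x : ℝ) : ℂ) ^ 2)) x := by
    intro x hx
    have hre := csqrt_re_pos (hmem (2 * π * x))
    have h0 : HasDerivAt (fun x : ℝ => ((2 * π * x : ℝ) : ℂ)) (2 * π) x := by
      simpa using ((hasDerivAt_id x).const_mul (2 * π)).ofReal_comp
    have h1 := (hasDerivAt_csqrt (hmem (2 * π * x))).comp x ((h0.pow 2).const_add (β ^ 2))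
    have hadd : 0 < (((2 * π * x : ℝ) : ℂ) + csqrt (β ^ 2 + ((2 * π * x : ℝ) : ℂ) ^ 2)).re := by
      rw [Complex.add_re, Complex.ofReal_re]
      positivity
    refine (((h0.add h1).clog_real (Or.inl hadd)).div_const 2).congr_deriv ?_
    have n1 : csqrt (β ^ 2 + ((2 * π * x : ℝ) : ℂ) ^ 2) ≠ 0 := fun h => by
      rw [h] at hre; simp at hre
    have n2 : ((2 * π * x : ℝ) : ℂ) + csqrt (β ^ 2 + ((2 * π * x : ℝ) : ℂ) ^ 2) ≠ 0 :=
      fun h => by rw [h] at hadd; simp at hadd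
    simp only [Pi.add_apply, Function.comp_apply, Pi.pow_apply] at *
    generalize csqrt (β ^ 2 + ((2 * π * x : ℝ) : ℂ) ^ 2) = S at *
    generalize ((2 * π * x : ℝ) : ℂ) = y at *
    field_simp
    ring
  have hcont : ContinuousOn (fun x : ℝ => π / csqrt (β ^ 2 + ((2 * π * x : ℝ) : ℂ) ^ 2)) univ := by
    intro x _
    have hre := csqrt_re_pos (hmem (2 * π * x))
    have h1 : ContinuousAt csqrt (β ^ 2 + ((2 * π * x : ℝ) : ℂ) ^ 2) :=
      (hasDerivAt_csqrt (hmem (2 * π * x))).continuousAt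
    have h2 : ContinuousAt (fun x : ℝ => β ^ 2 + ((2 * π * x : ℝ) : ℂ) ^ 2) x := by fun_prop
    refine (continuousAt_const.div (h1.comp_of_eq h2 rfl) fun h => ?_).continuousWithinAt
    rw [Function.comp_apply] at h
    rw [h] at hre
    simp at hre
  rw [intervalIntegral.integral_eq_sub_of_hasDerivAt (fun x hx => hd x ?_)
    ((hcont.mono (subset_univ _)).intervalIntegrable)]
  · have := csqrt_eq_of_sq_eq hβ (z := β ^ 2) (by simpa using hmem 0) rfl
    simp [this]
    ring
  · rw [uIcc_of_le N.cast_nonneg] at hx; exact hx.1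

lemma integrableOn_inv_mul_cosh (β : ℂ) :
    IntegrableOn (fun t : ℝ => 1 / (β * Real.cosh t)) (Ioi 0) := by
  refine (integrableOn_inv_cosh.ofReal.const_mul (1 / β)).congr (ae_of_all _ fun t => ?_)
  simp
  ring

lemma integral_inv_mul_cosh {β : ℂ} (hβ : 0 < β.re) :
    ∫ t in Ioi (0 : ℝ), 1 / (β * Real.cosh t) = π / β / 2 := by
  have h := integral_partialFraction hβ le_rfl
  have hs := csqrt_eq_of_sq_eq hβ (z := β ^ 2) (by
    simpa using sq_add_mem_slitPlane hβ le_rfl) rfl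
  simp only [mul_zero, Complex.ofReal_zero, ne_eq, OfNat.ofNat_ne_zero, not_false_eq_true, zero_pow,
    add_zero, hs] at h
  rw [← h, ← integral_div]
  refine integral_congr_ae (ae_of_all _ fun t => ?_)
  have hw : β * Real.cosh t ≠ 0 := fun h => by
    have := mul_cosh_re_pos hβ t
    rw [h] at this
    simp at this
  simp only [partialFraction, mul_zero, Complex.ofReal_zero, ne_eq, OfNat.ofNat_ne_zero,
    not_false_eq_true, zero_pow, add_zero]
  field_simp

lemma integrableOn_integral_partialFraction {β : ℂ} (hβ : 0 < β.re) (N : ℕ) : IntegrableOn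
    (fun t : ℝ => ∫ x in (0 : ℝ)..N, partialFraction (β * Real.cosh t) x) (Ioi 0) := by
  refine (integrable_partialFraction_prod hβ N).integral_prod_right.congr (ae_of_all _ fun t => ?_)
  simp [intervalIntegral.integral_of_le, uIoc_of_le, Function.uncurry]

lemma integrableOn_sum_partialFraction {β : ℂ} (hβ : 0 < β.re) (N : ℕ) : IntegrableOn (fun t : ℝ =>
    ∑ k ∈ Finset.range N, partialFraction (β * Real.cosh t) ((k : ℝ) + 1)) (Ioi 0) :=
  integrable_finsetSum _ fun k _ => integrableOn_partialFraction hβ (by positivity)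

lemma integrableOn_partialFractionRemainder {β : ℂ} (hβ : 0 < β.re) (N : ℕ) :
    IntegrableOn (fun t : ℝ => partialFractionRemainder N (β * Real.cosh t)) (Ioi 0) :=
  ((integrableOn_inv_mul_cosh β).add (integrableOn_sum_partialFraction hβ N)).sub
    (integrableOn_integral_partialFraction hβ N)

lemma integral_partialFractionRemainder {β : ℂ} (hβ : 0 < β.re) (N : ℕ) :
    ∫ t in Ioi (0 : ℝ), partialFractionRemainder N (β * Real.cosh t) =
      π / β / 2 + ∑ k ∈ Finset.range N,
        π / csqrt (β ^ 2 + ((2 * π * ((k : ℝ) + 1) : ℝ) : ℂ) ^ 2) -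
      (Complex.log (((2 * π * N : ℝ) : ℂ) + csqrt (β ^ 2 + ((2 * π * N : ℝ) : ℂ) ^ 2)) -
        Complex.log β) / 2 := by
  unfold partialFractionRemainder
  have hadd : Integrable (fun t : ℝ => 1 / (β * Real.cosh t) +
      ∑ k ∈ Finset.range N, partialFraction (β * Real.cosh t) ((k : ℝ) + 1))
      (volume.restrict (Ioi 0)) :=
    (integrableOn_inv_mul_cosh β).add (integrableOn_sum_partialFraction hβ N)
  have hswap := intervalIntegral_integral_swap (integrable_partialFraction_prod hβ N)
  rw [integral_sub hadd (integrableOn_integral_partialFraction hβ N),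
    integral_add (integrableOn_inv_mul_cosh β) (integrableOn_sum_partialFraction hβ N),
    integral_inv_mul_cosh hβ,
    integral_finsetSum _ fun k _ => integrableOn_partialFraction hβ (by positivity), ← hswap,
    ← integral_pi_div_csqrt hβ]
  refine congrArg₂ _ (congrArg _ ?_) ?_
  · exact Finset.sum_congr rfl fun k _ => integral_partialFraction hβ (by positivity)
  · refine intervalIntegral.integral_congr fun x hx => ?_
    rw [uIcc_of_le N.cast_nonneg] at hx
    exact integral_partialFraction hβ hx.1

lemma tendsto_integral_partialFractionRemainder {β : ℂ} (hβ : 0 < β.re) :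
    Tendsto (fun N => ∫ t in Ioi (0 : ℝ), partialFractionRemainder N (β * Real.cosh t)) atTop
      (𝓝 (∫ t in Ioi (0 : ℝ), 1 / (Complex.exp (β * Real.cosh t) - 1))) := by
  obtain ⟨C, hC0, hC⟩ := exists_sq_norm_add_le hβ
  have h0 : 0 < ‖β‖ := norm_pos_iff.2 fun h => by simp [h] at hβ
  refine tendsto_integral_of_dominated_convergence
    (fun t => (1 + 2 * C ^ 2) / ‖β‖ * (1 / Real.cosh t))
    (fun N => (integrableOn_partialFractionRemainder hβ N).aestronglyMeasurable)
    (integrableOn_inv_cosh.const_mul _) (fun N => ae_of_all _ fun t => ?_)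
    (ae_of_all _ fun t => tendsto_partialFractionRemainder (mul_cosh_re_pos hβ t))
  refine (norm_partialFractionRemainder_le (mul_cosh_re_pos hβ t)
    (hC _ (Real.cosh_pos t).le) N).trans (le_of_eq ?_)
  rw [norm_mul, Complex.norm_real, Real.norm_of_nonneg (Real.cosh_pos t).le]
  field_simp

lemma hasSum_exp_neg_mul {w : ℂ} (hw : 0 < w.re) :
    HasSum (fun n : ℕ => Complex.exp (-(((n : ℂ) + 1) * w))) (1 / (Complex.exp w - 1)) := by
  have hn : ‖Complex.exp (-w)‖ < 1 := by
    rw [Complex.norm_exp, Real.exp_lt_one_iff]; simpa using hw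
  have h := (hasSum_geometric_of_norm_lt_one hn).mul_left (Complex.exp (-w))
  have hval : Complex.exp (-w) * (1 - Complex.exp (-w))⁻¹ = 1 / (Complex.exp w - 1) := by
    rw [← div_eq_mul_inv, ← mul_div_mul_left _ _ (Complex.exp_ne_zero w), mul_sub, mul_one,
      ← Complex.exp_add, add_neg_cancel, Complex.exp_zero]
  rw [hval] at h
  refine h.congr_fun fun n => ?_
  rw [← Complex.exp_nat_mul, ← Complex.exp_add]
  ring_nf

lemma tsum_besselK_zero {β : ℂ} (hβ : 0 < β.re) : ∑' n : ℕ, besselK 0 (((n : ℂ) + 1) * β) =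
    ∫ t in Ioi (0 : ℝ), 1 / (Complex.exp (β * Real.cosh t) - 1) := by
  have hreal : ∀ t : ℝ, HasSum (fun n : ℕ => Real.exp (-(((n : ℝ) + 1) * (β.re * Real.cosh t))))
      (1 / (Real.exp (β.re * Real.cosh t) - 1)) := by
    intro t
    have h := hasSum_exp_neg_mul (w := ((β.re * Real.cosh t : ℝ) : ℂ))
      (by simpa using mul_pos hβ (Real.cosh_pos t))
    exact_mod_cast h
  refine HasSum.tsum_eq ?_
  have hF : ∀ n : ℕ, besselK 0 (((n : ℂ) + 1) * β) =
      ∫ t in Ioi (0 : ℝ), Complex.exp (-(((n : ℂ) + 1) * (β * Real.cosh t))) := by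
    intro n
    simp [besselK, mul_assoc]
  simp_rw [hF]
  refine hasSum_integral_of_dominated_convergence
    (fun n t => Real.exp (-(((n : ℝ) + 1) * (β.re * Real.cosh t))))
    (fun n => Continuous.aestronglyMeasurable (by fun_prop))
    (fun n => ae_of_all _ fun t => ?_) (ae_of_all _ fun t => (hreal t).summable) ?_
    (ae_of_all _ fun t => hasSum_exp_neg_mul (mul_cosh_re_pos hβ t))
  · rw [Complex.norm_exp]
    apply le_of_eq
    congr 1
    have : ((n : ℂ) + 1) = ((n + 1 : ℝ) : ℂ) := by push_cast; rfl
    rw [Complex.neg_re, this, Complex.re_ofReal_mul, Complex.re_mul_ofReal]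
  · simp_rw [fun t => (hreal t).tsum_eq]
    have hpos : ∀ t : ℝ, 0 < β.re * Real.cosh t := fun t => mul_pos hβ (Real.cosh_pos t)
    have hpos' : ∀ t : ℝ, 0 < Real.exp (β.re * Real.cosh t) - 1 := fun t =>
      sub_pos.2 (Real.one_lt_exp_iff.2 (hpos t))
    refine Integrable.mono' (integrableOn_inv_cosh.const_mul (1 / β.re))
      (Continuous.aestronglyMeasurable (Continuous.div (by fun_prop) (by fun_prop)
        fun t => (hpos' t).ne')) (ae_of_all _ fun t => ?_)
    rw [Real.norm_of_nonneg (one_div_nonneg.2 (hpos' t).le), one_div_mul_one_div]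
    exact one_div_exp_sub_one_le (hpos t)

lemma summable_csqrt_terms {β : ℂ} (hβ : 0 < β.re) : Summable fun n : ℕ =>
    1 / csqrt (β ^ 2 + ((2 * π * ((n : ℝ) + 1) : ℝ) : ℂ) ^ 2) -
      1 / ((2 * π * ((n : ℝ) + 1) : ℝ) : ℂ) := by
  obtain ⟨C, hC0, hC⟩ := exists_sq_norm_add_le hβ
  have hβ0 : 0 < ‖β‖ := norm_pos_iff.2 fun h => by simp [h] at hβ
  have hs : Summable fun n : ℕ => ‖β‖ * √C * (1 / ((n : ℝ) + 1) ^ 2) := by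
    have := (summable_nat_add_iff 1).2 (Real.summable_one_div_nat_pow.2 one_lt_two)
    refine Summable.mul_left _ (this.congr fun n => ?_)
    push_cast; rfl
  refine Summable.of_norm_bounded hs fun n => ?_
  have hyn : (n : ℝ) + 1 ≤ 2 * π * ((n : ℝ) + 1) := by
    have : (0 : ℝ) ≤ n := n.cast_nonneg
    nlinarith [Real.pi_gt_three]
  have hn : (0 : ℝ) < (n : ℝ) + 1 := by positivity
  have hy : 0 < 2 * π * ((n : ℝ) + 1) := by positivity
  generalize 2 * π * ((n : ℝ) + 1) = y at *
  have hmem : β ^ 2 + (y : ℂ) ^ 2 ∈ Complex.slitPlane := by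
    exact_mod_cast sq_add_mem_slitPlane hβ (sq_nonneg y)
  have hre := csqrt_re_pos hmem
  have hsq := csqrt_sq (β ^ 2 + (y : ℂ) ^ 2)
  have hnorm := hC 1 zero_le_one y hy.le
  rw [Complex.ofReal_one, mul_one, ← hsq, norm_pow, ← Real.sq_sqrt hC0.le, ← mul_pow] at hnorm
  generalize csqrt (β ^ 2 + (y : ℂ) ^ 2) = S at *
  have hnorm' := (pow_le_pow_iff_left₀ (by positivity) (by positivity) two_ne_zero).1 hnorm
  have hS0 : S ≠ 0 := fun h => by simp [h] at hre
  have hSn : 0 < ‖S‖ := norm_pos_iff.2 hS0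
  have hy0 : (y : ℂ) ≠ 0 := by exact_mod_cast hy.ne'
  have hadd : y ≤ ‖S + y‖ := by
    refine le_trans ?_ (Complex.re_le_norm _)
    simp [hre.le]
  have hadd0 : S + y ≠ 0 := norm_pos_iff.1 (hy.trans_le hadd)
  have e : 1 / S - 1 / (y : ℂ) = -β ^ 2 * (S⁻¹ * ((y : ℂ)⁻¹ * (S + y)⁻¹)) := by
    field_simp
    linear_combination -hsq
  rw [e, norm_mul, norm_mul, norm_mul, norm_neg, norm_pow, norm_inv, norm_inv, norm_inv,
    Complex.norm_real, Real.norm_of_nonneg hy.le]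
  have h1 : ‖β‖ * ‖S‖⁻¹ ≤ √C := by
    rw [← div_eq_mul_inv, div_le_iff₀ hSn]; linarith
  have h2 : y⁻¹ * ‖S + y‖⁻¹ ≤ 1 / ((n : ℝ) + 1) ^ 2 := by
    rw [one_div, pow_two, mul_inv]
    gcongr
    exact hyn.trans hadd
  calc ‖β‖ ^ 2 * (‖S‖⁻¹ * (y⁻¹ * ‖S + y‖⁻¹))
      = ‖β‖ * (‖β‖ * ‖S‖⁻¹) * (y⁻¹ * ‖S + y‖⁻¹) := by ring
    _ ≤ ‖β‖ * √C * (1 / ((n : ℝ) + 1) ^ 2) := by gcongr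

lemma tendsto_log_add_csqrt_sub_log {β : ℂ} (hβ : 0 < β.re) : Tendsto (fun N : ℕ =>
    Complex.log (((2 * π * N : ℝ) : ℂ) + csqrt (β ^ 2 + ((2 * π * N : ℝ) : ℂ) ^ 2)) -
      (Real.log N : ℂ)) atTop (𝓝 (Complex.log (4 * π))) := by
  have hinv : Tendsto (fun N : ℕ => β / (N : ℂ)) atTop (𝓝 0) :=
    tendsto_const_div_atTop_nhds_zero_nat β
  have h2pi : (2 * π : ℂ).re = 2 * π := by
    rw [← Complex.ofReal_ofNat, ← Complex.ofReal_mul, Complex.ofReal_re]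
  have hpi : 0 < (2 * π : ℂ).re := by rw [h2pi]; positivity
  have hm : (2 * π : ℂ) ^ 2 ∈ Complex.slitPlane := by
    simpa using sq_add_mem_slitPlane hpi le_rfl
  have hs : csqrt ((2 * π : ℂ) ^ 2) = 2 * π := csqrt_eq_of_sq_eq hpi hm rfl
  have hc : Tendsto (fun N : ℕ => csqrt ((β / (N : ℂ)) ^ 2 + (2 * π) ^ 2)) atTop (𝓝 (2 * π)) := by
    have h1 : Tendsto (fun N : ℕ => (β / (N : ℂ)) ^ 2 + (2 * π : ℂ) ^ 2) atTop
        (𝓝 ((2 * π : ℂ) ^ 2)) := by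
      simpa using (hinv.pow 2).add_const ((2 * π : ℂ) ^ 2)
    have h2 := (hasDerivAt_csqrt hm).continuousAt.tendsto
    rw [hs] at h2
    exact h2.comp h1
  have hl : Tendsto (fun N : ℕ => Complex.log (2 * π + csqrt ((β / (N : ℂ)) ^ 2 + (2 * π) ^ 2)))
      atTop (𝓝 (Complex.log (4 * π))) := by
    have h3 := hc.const_add (2 * π : ℂ)
    have e : (2 * π + 2 * π : ℂ) = 4 * π := by ring
    rw [e] at h3
    refine h3.clog (Or.inl ?_)
    rw [← e, Complex.add_re]
    positivity
  refine hl.congr' ?_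
  filter_upwards [eventually_gt_atTop 0] with N hN
  have hNr : (0 : ℝ) < N := by exact_mod_cast hN
  have hNc : (N : ℂ) ≠ 0 := by exact_mod_cast hN.ne'
  have hre : 0 < (β / (N : ℂ)).re := by
    rw [Complex.div_natCast_re]; positivity
  have hm' : (β / (N : ℂ)) ^ 2 + (2 * π) ^ 2 ∈ Complex.slitPlane := by
    have := sq_add_mem_slitPlane hre (sq_nonneg (2 * π))
    push_cast at this
    exact this
  have hm'' : β ^ 2 + ((2 * π * N : ℝ) : ℂ) ^ 2 ∈ Complex.slitPlane := by
    exact_mod_cast sq_add_mem_slitPlane hβ (sq_nonneg (2 * π * (N : ℝ)))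
  have hcs := csqrt_re_pos hm'
  have e1 : csqrt (β ^ 2 + ((2 * π * N : ℝ) : ℂ) ^ 2) =
      (N : ℝ) * csqrt ((β / (N : ℂ)) ^ 2 + (2 * π) ^ 2) := by
    refine csqrt_eq_of_sq_eq ?_ hm'' ?_
    · rw [Complex.re_ofReal_mul]; positivity
    · rw [mul_pow, csqrt_sq]
      push_cast
      field_simp
  have e2 : ((2 * π * N : ℝ) : ℂ) + csqrt (β ^ 2 + ((2 * π * N : ℝ) : ℂ) ^ 2) =
      (N : ℝ) * (2 * π + csqrt ((β / (N : ℂ)) ^ 2 + (2 * π) ^ 2)) := by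
    rw [e1]; push_cast; ring
  have hne : 2 * π + csqrt ((β / (N : ℂ)) ^ 2 + (2 * π) ^ 2) ≠ 0 := fun h => by
    have h' := congrArg Complex.re h
    rw [Complex.add_re, Complex.zero_re] at h'
    linarith
  rw [e2, Complex.log_ofReal_mul hNr hne]
  ring

end helpers

theorem stmt17 (β : ℂ) (hβ : 0 < β.re) :
    2 * ∑' n : ℕ, besselK 0 (((n : ℂ) + 1) * β)
      = (π : ℂ) * (1 / β +
          2 * ∑' n : ℕ, (1 / csqrt (β^2 + 4 * (π : ℂ)^2 * ((n : ℂ) + 1)^2) -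
            1 / (2 * ((n : ℂ) + 1) * (π : ℂ))))
        + (Real.eulerMascheroniConstant : ℂ) + Complex.log (β / 2) - Complex.log (2 * (π : ℂ)) := by
  have hpi : (π : ℂ) ≠ 0 := by exact_mod_cast Real.pi_ne_zero
  have hβ0 : β ≠ 0 := fun h => by simp [h] at hβ
  have hsum := (summable_csqrt_terms hβ).hasSum.tendsto_sum_nat
  have hterm : ∀ n : ℕ, 1 / csqrt (β ^ 2 + 4 * (π : ℂ) ^ 2 * ((n : ℂ) + 1) ^ 2) -
      1 / (2 * ((n : ℂ) + 1) * (π : ℂ)) =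
      1 / csqrt (β ^ 2 + ((2 * π * ((n : ℝ) + 1) : ℝ) : ℂ) ^ 2) -
        1 / ((2 * π * ((n : ℝ) + 1) : ℝ) : ℂ) := by
    intro n
    push_cast
    ring_nf
  simp_rw [hterm]
  rw [tsum_besselK_zero hβ]
  have hγ : Filter.Tendsto (fun N : ℕ => (((harmonic N : ℝ) - Real.log N : ℝ) : ℂ)) Filter.atTop
      (nhds (Real.eulerMascheroniConstant : ℂ)) :=
    (Complex.continuous_ofReal.tendsto _).comp Real.tendsto_harmonic_sub_log
  have hlim := ((hsum.const_mul (2 * π : ℂ)).add hγ).sub (tendsto_log_add_csqrt_sub_log hβ)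
  have hlim' := hlim.const_add (π / β + Complex.log β)
  have huniq := tendsto_nhds_unique
    ((tendsto_integral_partialFractionRemainder hβ).const_mul 2) (hlim'.congr fun N => ?_)
  · rw [huniq]
    have hl1 : Complex.log (β / 2) = Complex.log β - Complex.log 2 := by
      have h := Complex.log_ofReal_mul (r := 1 / 2) (by norm_num) hβ0
      have e : ((1 / 2 : ℝ) : ℂ) * β = β / 2 := by push_cast; ring
      rw [e, one_div, Real.log_inv, Complex.ofReal_neg, Complex.ofReal_log zero_le_two] at h
      rw [h, Complex.ofReal_ofNat]
      ring
    have hl2 : Complex.log (4 * π) = Complex.log 2 + Complex.log (2 * π) := by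
      have h := Complex.log_ofReal_mul (r := 2) (x := 2 * π) (by norm_num) (by simp [hpi])
      have e : ((2 : ℝ) : ℂ) * (2 * π) = 4 * π := by push_cast; ring
      rw [e, Complex.ofReal_log zero_le_two] at h
      rw [h, Complex.ofReal_ofNat]
    rw [hl1, hl2]
    ring
  · rw [integral_partialFractionRemainder hβ, Finset.sum_sub_distrib]
    have hH : (harmonic N : ℂ) = 2 * π *
        ∑ k ∈ Finset.range N, 1 / ((2 * π * ((k : ℝ) + 1) : ℝ) : ℂ) := by
      rw [harmonic, Finset.mul_sum]
      push_cast
      refine Finset.sum_congr rfl fun k _ => ?_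
      have : (k : ℂ) + 1 ≠ 0 := by exact_mod_cast k.succ_ne_zero
      field_simp
    have hS : ∑ k ∈ Finset.range N, π / csqrt (β ^ 2 + ((2 * π * ((k : ℝ) + 1) : ℝ) : ℂ) ^ 2) =
        π * ∑ k ∈ Finset.range N, 1 / csqrt (β ^ 2 + ((2 * π * ((k : ℝ) + 1) : ℝ) : ℂ) ^ 2) := by
      rw [Finset.mul_sum]
      exact Finset.sum_congr rfl fun k _ => by ring
    rw [hS]
    have hH' : ((((harmonic N : ℚ) : ℝ) : ℝ) : ℂ) = ((harmonic N : ℚ) : ℂ) := by push_cast; rfl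
    rw [Complex.ofReal_sub, hH', hH]
    ring
end
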